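/- Assume the dataset D has ℓ¹ diameter at most 1. Then for every z ∈ ℝ^d, the mixup-plus-noise output densities satisfy p(z) ≤ (1 − k/n + exp(1/(kσ)) · k/n) · q(z). -/

import Mathlib

/-!
Split the `k`-subsets of `D` according to whether they contain `x₀`: a fraction `1 - k / n` of them
avoids `x₀`, and these average to the density of `D.erase x₀`. In a `k`-subset containing `x₀`,
replace `x₀` by a uniformly random `y` outside the subset. The barycentre moves by `(y - x₀) / k`,
so the Laplacian density changes by a factor of at most `exp (1 / (k * σ))`, and the resulting
random subset is again a uniform `k`-subset of `D.erase x₀`.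
-/

open Finset

/-- The d-dimensional isotropic Laplacian density with scale σ. -/
noncomputable def laplacianDensity (d : ℕ) (σ : ℝ) (η : Fin d → ℝ) : ℝ :=
  ((2 * σ) ^ d)⁻¹ * Real.exp (-(∑ i, |η i|) / σ)

/-- The mixup-plus-noise output density of a finite dataset `P`. -/
noncomputable def mixupDensity (d : ℕ) (σ : ℝ) (k : ℕ) (P : Finset (Fin d → ℝ))
    (z : Fin d → ℝ) : ℝ :=
  ((P.card.choose k : ℝ))⁻¹ *
    ∑ S ∈ P.powersetCard k, laplacianDensity d σ (z - (k : ℝ)⁻¹ • ∑ x ∈ S, x)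

open scoped BigOperators

section AverageOverSubsets

variable {α M : Type*} [DecidableEq α]

lemma sum_powersetCard_sum_sdiff_insert [AddCommMonoid M] (s : Finset α) (k : ℕ)
    (f : Finset α → M) :
    ∑ T ∈ s.powersetCard k, ∑ y ∈ s \ T, f (insert y T) =
      (k + 1) • ∑ S ∈ s.powersetCard (k + 1), f S := by
  have marked : (k + 1) • ∑ S ∈ s.powersetCard (k + 1), f S =
      ∑ S ∈ s.powersetCard (k + 1), ∑ _y ∈ S, f S := by
    rw [smul_sum]
    exact sum_congr rfl fun S hS ↦ by rw [sum_const, (mem_powersetCard.1 hS).2]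
  rw [marked, sum_sigma', sum_sigma']
  refine sum_bij' (fun p _ ↦ ⟨insert p.2 p.1, p.2⟩) (fun p _ ↦ ⟨p.1.erase p.2, p.2⟩)
    ?_ ?_ ?_ ?_ fun _ _ ↦ rfl
  · rintro ⟨T, y⟩ hp
    simp only [mem_sigma, mem_powersetCard, mem_sdiff] at hp ⊢
    obtain ⟨⟨hT, hcard⟩, hys, hyT⟩ := hp
    exact ⟨⟨insert_subset hys hT, by rw [card_insert_of_notMem hyT, hcard]⟩, mem_insert_self _ _⟩
  · rintro ⟨S, y⟩ hp
    simp only [mem_sigma, mem_powersetCard, mem_sdiff] at hp ⊢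
    obtain ⟨⟨hS, hcard⟩, hyS⟩ := hp
    exact ⟨⟨(erase_subset _ _).trans hS, by rw [card_erase_of_mem hyS, hcard, Nat.add_sub_cancel]⟩,
      hS hyS, notMem_erase _ _⟩
  · rintro ⟨T, y⟩ hp
    simp only [mem_sigma, mem_sdiff] at hp
    simp [erase_insert hp.2.2]
  · rintro ⟨S, y⟩ hp
    simp only [mem_sigma] at hp
    simp [insert_erase hp.2]

lemma sum_powersetCard_succ_insert [AddCommMonoid M] {a : α} {s : Finset α} (ha : a ∉ s) (k : ℕ)
    (f : Finset α → M) :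
    ∑ S ∈ (insert a s).powersetCard (k + 1), f S =
      ∑ S ∈ s.powersetCard (k + 1), f S + ∑ T ∈ s.powersetCard k, f (insert a T) := by
  have notMem {j : ℕ} {S : Finset α} (hS : S ∈ s.powersetCard j) : a ∉ S :=
    fun h ↦ ha ((mem_powersetCard.1 hS).1 h)
  rw [powersetCard_succ_insert ha, sum_union, sum_image]
  · intro S hS T hT hST
    rw [← erase_insert (notMem hS), hST, erase_insert (notMem hT)]
  · rw [disjoint_left]
    intro S hS hS'
    obtain ⟨T, -, rfl⟩ := mem_image.1 hS'
    exact notMem hS (mem_insert_self _ _)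

section Module

variable [AddCommMonoid M] [Module ℚ≥0 M]

lemma expect_powersetCard_expect_sdiff_insert (s : Finset α) (k : ℕ) (f : Finset α → M) :
    𝔼 T ∈ s.powersetCard k, 𝔼 y ∈ s \ T, f (insert y T) = 𝔼 S ∈ s.powersetCard (k + 1), f S := by
  have inner_eq : ∀ T ∈ s.powersetCard k, 𝔼 y ∈ s \ T, f (insert y T) =
      ((#s - k : ℕ) : ℚ≥0)⁻¹ • ∑ y ∈ s \ T, f (insert y T) := fun T hT ↦ by
    obtain ⟨hTs, hcard⟩ := mem_powersetCard.1 hT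
    rw [expect, card_sdiff_of_subset hTs, hcard]
  have choose_eq : ((#s).choose (k + 1) : ℚ≥0) * (k + 1 : ℕ) = (#s).choose k * (#s - k : ℕ) :=
    mod_cast Nat.choose_succ_right_eq #s k
  rw [expect_congr rfl inner_eq, expect, ← smul_sum, sum_powersetCard_sum_sdiff_insert, expect,
    card_powersetCard, card_powersetCard, ← Nat.cast_smul_eq_nsmul ℚ≥0, smul_smul, smul_smul,
    ← mul_inv, ← choose_eq, mul_inv, inv_mul_cancel_right₀ (mod_cast k.succ_ne_zero)]

-- For `k > #s` every average below is over the empty set, so the truncated subtraction is harmless.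
lemma card_add_one_nsmul_expect_powersetCard_succ_insert {a : α} {s : Finset α} (ha : a ∉ s) (k : ℕ)
    (f : Finset α → M) :
    (#s + 1) • 𝔼 S ∈ (insert a s).powersetCard (k + 1), f S =
      (#s - k) • 𝔼 S ∈ s.powersetCard (k + 1), f S +
        (k + 1) • 𝔼 T ∈ s.powersetCard k, f (insert a T) := by
  obtain hk | hk := lt_or_ge #s k
  · have hinsert : #(insert a s) < k + 1 := by rw [card_insert_of_notMem ha]; omega
    simp [powersetCard_eq_empty.2 hinsert, powersetCard_eq_empty.2 hk,
      powersetCard_eq_empty.2 (hk.trans k.lt_succ_self)]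
  have pascal := sum_powersetCard_succ_insert ha k f
  simp only [← card_smul_expect, card_powersetCard, card_insert_of_notMem ha] at pascal
  have cleared : (#s).choose k • (#s + 1) • 𝔼 S ∈ (insert a s).powersetCard (k + 1), f S =
      (#s).choose k • ((#s - k) • 𝔼 S ∈ s.powersetCard (k + 1), f S +
        (k + 1) • 𝔼 T ∈ s.powersetCard k, f (insert a T)) := by
    rw [smul_smul, mul_comm, Nat.add_one_mul_choose_eq, mul_comm, mul_smul, pascal, smul_add,
      smul_smul, mul_comm, Nat.choose_succ_right_eq, mul_smul, smul_comm (k + 1), ← smul_add]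
  have : IsAddTorsionFree M := .of_module_nnrat M
  exact nsmul_right_injective (Nat.choose_pos hk).ne' cleared

end Module

lemma expect_powersetCard_succ_insert_le {𝕜 : Type*} [Field 𝕜] [LinearOrder 𝕜]
    [IsStrictOrderedRing 𝕜] {a : α} {s : Finset α} (ha : a ∉ s) {k : ℕ} (hk : k < #s)
    {f : Finset α → 𝕜} {c : 𝕜}
    (hf : ∀ T ∈ s.powersetCard k, ∀ y ∈ s \ T, f (insert a T) ≤ c * f (insert y T)) :
    𝔼 S ∈ (insert a s).powersetCard (k + 1), f S ≤
      (1 - (k + 1) / (#s + 1) + c * ((k + 1) / (#s + 1))) *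
        𝔼 S ∈ s.powersetCard (k + 1), f S := by
  have exchange : 𝔼 T ∈ s.powersetCard k, f (insert a T) ≤
      c * 𝔼 S ∈ s.powersetCard (k + 1), f S := by
    rw [← expect_powersetCard_expect_sdiff_insert, mul_expect]
    refine expect_le_expect fun T hT ↦ ?_
    obtain ⟨hTs, hcard⟩ := mem_powersetCard.1 hT
    have hne : (s \ T).Nonempty := card_pos.1 (by rw [card_sdiff_of_subset hTs]; omega)
    rw [mul_expect]
    exact le_expect hne (hf T hT)
  have split := card_add_one_nsmul_expect_powersetCard_succ_insert ha k f
  simp only [nsmul_eq_mul, Nat.cast_sub hk.le, Nat.cast_add_one] at split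
  have hs : (0 : 𝕜) < #s + 1 := by positivity
  calc 𝔼 S ∈ (insert a s).powersetCard (k + 1), f S
      = ((#s - k) * 𝔼 S ∈ s.powersetCard (k + 1), f S +
          (k + 1) * 𝔼 T ∈ s.powersetCard k, f (insert a T)) / (#s + 1) := by
        rw [← split, mul_div_cancel_left₀ _ hs.ne']
    _ ≤ ((#s - k) * 𝔼 S ∈ s.powersetCard (k + 1), f S +
          (k + 1) * (c * 𝔼 S ∈ s.powersetCard (k + 1), f S)) / (#s + 1) := by gcongr
    _ = _ := by field_simp; ring

end AverageOverSubsets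

section Laplacian

variable {d : ℕ} {σ : ℝ}

lemma laplacianDensity_nonneg (hσ : 0 ≤ σ) (u : Fin d → ℝ) : 0 ≤ laplacianDensity d σ u := by
  unfold laplacianDensity
  positivity

lemma laplacianDensity_le_exp_mul (hσ : 0 < σ) (u v : Fin d → ℝ) :
    laplacianDensity d σ u ≤ Real.exp ((∑ i, |u i - v i|) / σ) * laplacianDensity d σ v := by
  have triangle : ∑ i, |v i| ≤ ∑ i, |u i - v i| + ∑ i, |u i| := by
    rw [← sum_add_distrib]
    refine sum_le_sum fun i _ ↦ ?_
    rw [abs_sub_comm]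
    simpa using abs_add_le (v i - u i) (u i)
  rw [laplacianDensity, laplacianDensity, mul_left_comm, ← Real.exp_add, ← add_div]
  gcongr
  linarith

lemma laplacianDensity_sub_inv_smul_add_le (hσ : 0 < σ) {Δ : ℝ} {x y : Fin d → ℝ}
    (hxy : ∑ i, |x i - y i| ≤ Δ) (k : ℕ) (t z : Fin d → ℝ) :
    laplacianDensity d σ (z - (k : ℝ)⁻¹ • (x + t)) ≤
      Real.exp (Δ / (k * σ)) * laplacianDensity d σ (z - (k : ℝ)⁻¹ • (y + t)) := by
  have shift (i : Fin d) : (z - (k : ℝ)⁻¹ • (x + t)) i - (z - (k : ℝ)⁻¹ • (y + t)) i =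
      (y i - x i) / k := by
    simp only [Pi.sub_apply, Pi.smul_apply, Pi.add_apply, smul_eq_mul]
    ring
  have distance : ∑ i, |(z - (k : ℝ)⁻¹ • (x + t)) i - (z - (k : ℝ)⁻¹ • (y + t)) i| =
      (∑ i, |x i - y i|) / k := by
    simp only [shift, abs_div, Nat.abs_cast, sum_div, abs_sub_comm]
  refine (laplacianDensity_le_exp_mul hσ _ (z - (k : ℝ)⁻¹ • (y + t))).trans ?_
  rw [distance, div_div]
  gcongr
  exact laplacianDensity_nonneg hσ.le _

end Laplacian

lemma mixupDensity_eq_expect (d : ℕ) (σ : ℝ) (k : ℕ) (P : Finset (Fin d → ℝ)) (z : Fin d → ℝ) :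
    mixupDensity d σ k P z =
      𝔼 S ∈ P.powersetCard k, laplacianDensity d σ (z - (k : ℝ)⁻¹ • ∑ x ∈ S, x) := by
  rw [mixupDensity, expect_eq_sum_div_card, card_powersetCard, inv_mul_eq_div]

theorem mixup_density_upper_ratio_bound_general {d : ℕ} {σ Δ : ℝ} (hσ : 0 < σ)
    {D : Finset (Fin d → ℝ)} {x₀ : Fin d → ℝ} (hx₀ : x₀ ∈ D)
    (hdist : ∀ y ∈ D.erase x₀, ∑ i, |x₀ i - y i| ≤ Δ) {k : ℕ} (hk : 1 ≤ k) (hkD : k < #D)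
    (z : Fin d → ℝ) :
    mixupDensity d σ k D z ≤
      (1 - (k : ℝ) / #D + Real.exp (Δ / (k * σ)) * ((k : ℝ) / #D)) *
        mixupDensity d σ k (D.erase x₀) z := by
  obtain ⟨j, rfl⟩ := Nat.exists_eq_add_of_le' hk
  have hcard := card_erase_add_one hx₀
  have hx₀' := notMem_erase x₀ D
  rw [mixupDensity_eq_expect, mixupDensity_eq_expect]
  nth_rw 1 [← insert_erase hx₀]
  rw [← hcard, Nat.cast_add_one, Nat.cast_add_one]
  refine expect_powersetCard_succ_insert_le hx₀' (by omega) fun T hT y hy ↦ ?_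
  obtain ⟨hyD, hyT⟩ := mem_sdiff.1 hy
  rw [sum_insert fun h ↦ hx₀' ((mem_powersetCard.1 hT).1 h), sum_insert hyT]
  exact_mod_cast laplacianDensity_sub_inv_smul_add_le hσ (hdist y hyD) (j + 1) _ z

/-- If `D` has ℓ¹ diameter at most 1, then
`p(z) ≤ (1 − k/n + exp(1/(kσ))·k/n)·q(z)` for every `z ∈ ℝ^d`. -/
theorem mixup_density_upper_ratio_bound
    (d : ℕ) (hd : 1 ≤ d) (σ : ℝ) (hσ : 0 < σ)
    (D : Finset (Fin d → ℝ)) (n : ℕ) (hn : D.card = n)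
    (hdiam : ∀ x ∈ D, ∀ y ∈ D, ∑ i, |x i - y i| ≤ 1)
    (x₀ : Fin d → ℝ) (hx₀ : x₀ ∈ D)
    (k : ℕ) (hk1 : 1 ≤ k) (hkn : k ≤ n - 1)
    (z : Fin d → ℝ) :
    mixupDensity d σ k D z
      ≤ (1 - (k : ℝ) / n + Real.exp (1 / (k * σ)) * ((k : ℝ) / n)) *
          mixupDensity d σ k (D.erase x₀) z := by
  subst hn
  exact mixup_density_upper_ratio_bound_general hσ hx₀
    (fun y hy ↦ hdiam x₀ hx₀ y (mem_of_mem_erase hy)) hk1 (by omega) z
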